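/- arXiv:1602.06715 — 2 statements merged into one kernel-verified Lean document; each statement's English description precedes it below -/
import Mathlib

section
/- Let G be a finite abelian group having an internal direct sum decomposition G = G₁ ⊕ H where G₁ is cyclic of order 3m+2 with m ≥ 1 an integer, and suppose |H| is even. Then N₃(G) ≥ ((2m+1)/(6m+4))·|G|. -/
open Pointwise

/-- `itSum k A` is the `k`-fold sumset `kA = {a₁ + ⋯ + a_k : aᵢ ∈ A}`. -/
def itSum {G : Type*} [AddCommGroup G] : ℕ → Set G → Set G
  | 0, _ => {0}
  | (k + 1), A => itSum k A + A

/-- `Nk G k` is the largest size of an aperiodic subset `A ⊆ G` with `kA ≠ G` which is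
maximal with this property; `0` if no such subset exists. -/
noncomputable def Nk (G : Type*) [AddCommGroup G] (k : ℕ) : ℕ :=
  sSup {m : ℕ | ∃ A : Set G,
    {g : G | g +ᵥ A = A} = {0} ∧
    itSum k A ≠ Set.univ ∧
    (∀ g ∉ A, itSum k (A ∪ {g}) = Set.univ) ∧
    m = A.ncard}

/-!
Identify `G` with `ℤ/(3m+2) × H` and choose a subgroup `K ≤ H` of index two. Let `A` be the set
whose fibres over `0, …, m + 1` are `H \ K`, then `m - 1` copies of `H`, then `H \ {0}`, then `{0}`,
and whose other fibres are empty. It is aperiodic, has `(2m+1)|H|/2` elements, and satisfies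
`2A = G \ (-A)`. For an aperiodic finite set this last identity already gives everything:
`z ∉ 3A` means that `z - A` avoids `2A`, i.e. that `A - z ⊆ A`, so `3A = G \ {0}`; and if `g ∉ A`
then `-g ∈ 2A`, so that adjoining `g` to `A` puts `0` into the threefold sumset.

The identity `2A = G \ (-A)` fails only for `m = 1` and `|H| = 2`, where `|A| = 3` and `2A` is too
small. There `G = ℤ/5 × ℤ/2`, and the maximality of `A` is a finite computation.
-/

section Sumset

variable {G G' : Type*} [AddCommGroup G] [AddCommGroup G'] {k : ℕ} {A B : Set G}

theorem itSum_two (A : Set G) : itSum 2 A = A + A := by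
  simp only [itSum, Set.singleton_add, zero_add, Set.image_id']

theorem itSum_three (A : Set G) : itSum 3 A = A + A + A := by
  rw [itSum, itSum_two]

theorem itSum_mono (h : A ⊆ B) (k : ℕ) : itSum k A ⊆ itSum k B := by
  induction k with
  | zero => exact subset_rfl
  | succ k ih => exact Set.add_subset_add ih h

theorem itSum_image (f : G →+ G') (k : ℕ) (A : Set G) : itSum k (f '' A) = f '' itSum k A := by
  induction k with
  | zero => simp only [itSum, Set.image_singleton, map_zero]
  | succ k ih => rw [itSum, itSum, ih, Set.image_add]

theorem itSum_succ_eq_compl_zero (hA : A.Finite) (hper : {g : G | g +ᵥ A = A} = {0})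
    (hk : itSum k A = (-A)ᶜ) : itSum (k + 1) A = {0}ᶜ := by
  refine Set.Subset.antisymm ?_ fun z hz ↦ ?_
  · rintro _ ⟨b, hb, a, ha, rfl⟩ h0
    rw [hk] at hb
    exact hb (by rwa [Set.mem_neg, neg_eq_of_add_eq_zero_right h0])
  · by_contra hzA
    have hsub : -z +ᵥ A ⊆ A := by
      rintro _ ⟨a, ha, rfl⟩
      have h : z - a ∉ itSum k A := fun h ↦ hzA ⟨z - a, h, a, ha, sub_add_cancel z a⟩
      rwa [hk, Set.notMem_compl_iff, Set.mem_neg, neg_sub, sub_eq_neg_add] at h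
    have hstab : -z +ᵥ A = A :=
      hA.eq_of_subset_of_card_le hsub (Set.natCard_vadd_set (-z) A).ge
    have hz0 : -z ∈ ({0} : Set G) := hper ▸ hstab
    exact hz (neg_eq_zero.1 hz0)

/-- The sets over which `Nk G k` takes its maximum: aperiodic sets `A` that are maximal subject to
`kA ≠ G`. -/
structure IsMaximalAperiodic (k : ℕ) (A : Set G) : Prop where
  period_eq : {g : G | g +ᵥ A = A} = {0}
  itSum_ne_univ : itSum k A ≠ Set.univ
  itSum_union_singleton : ∀ g ∉ A, itSum k (A ∪ {g}) = Set.univ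

namespace IsMaximalAperiodic

theorem of_itSum_eq_compl_neg (hA : A.Finite) (hper : {g : G | g +ᵥ A = A} = {0})
    (hk : itSum k A = (-A)ᶜ) : IsMaximalAperiodic (k + 1) A where
  period_eq := hper
  itSum_ne_univ := by
    rw [itSum_succ_eq_compl_zero hA hper hk]
    exact Set.compl_ne_univ.2 (Set.singleton_nonempty 0)
  itSum_union_singleton g hg := by
    have hsub : A ⊆ A ∪ {g} := Set.subset_union_left
    refine Set.eq_univ_of_forall fun z ↦ ?_
    by_cases hz : z = 0
    · have hneg : -g ∈ itSum k A := by rwa [hk, Set.mem_compl_iff, Set.neg_mem_neg]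
      exact ⟨-g, itSum_mono hsub k hneg, g, Or.inr rfl, (neg_add_cancel g).trans hz.symm⟩
    · refine itSum_mono hsub (k + 1) ?_
      rwa [itSum_succ_eq_compl_zero hA hper hk]

theorem image (e : G ≃+ G') (hA : IsMaximalAperiodic k A) : IsMaximalAperiodic k (e '' A) := by
  have himage (B : Set G) : itSum k (e '' B) = e '' itSum k B := itSum_image e.toAddMonoidHom k B
  have huniv : e '' Set.univ = Set.univ := Set.image_univ_of_surjective e.surjective
  refine ⟨?_, ?_, ?_⟩
  · ext g
    obtain ⟨g, rfl⟩ := e.surjective g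
    have hg : g +ᵥ A = A ↔ g = 0 := Set.ext_iff.1 hA.period_eq g
    rw [Set.mem_ofPred_eq, Set.mem_singleton_iff, ← Set.image_vadd_distrib,
      e.injective.image_injective.eq_iff, hg, map_eq_zero_iff e e.injective]
  · rw [himage, ← huniv]
    exact e.injective.image_injective.ne hA.itSum_ne_univ
  · intro g hg
    obtain ⟨g, rfl⟩ := e.surjective g
    have hgA : g ∉ A := fun h ↦ hg ⟨g, h, rfl⟩
    rw [← Set.image_singleton, ← Set.image_union, himage, hA.itSum_union_singleton g hgA, huniv]

theorem ncard_le_Nk [Finite G] (hA : IsMaximalAperiodic k A) : A.ncard ≤ Nk G k := by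
  refine le_csSup ⟨Nat.card G, ?_⟩
    ⟨A, hA.period_eq, hA.itSum_ne_univ, hA.itSum_union_singleton, rfl⟩
  rintro _ ⟨B, -, -, -, rfl⟩
  exact Set.ncard_le_card B

end IsMaximalAperiodic

end Sumset

section Subgroup

variable {G : Type*} [AddCommGroup G]

theorem exists_addSubgroup_index_eq_of_dvd_card [Finite G] {p : ℕ} [hp : Fact p.Prime]
    (hdvd : p ∣ Nat.card G) : ∃ K : AddSubgroup G, K.index = p := by
  have hrange : LinearMap.range (LinearMap.lsmul ℤ G p) ≠ ⊤ := by
    intro htop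
    have hinj := Finite.injective_iff_surjective.2 (LinearMap.range_eq_top.1 htop)
    obtain ⟨x, hx⟩ := exists_prime_addOrderOf_dvd_card' p hdvd
    have hpx : p • x = 0 := by rw [← hx, addOrderOf_nsmul_eq_zero]
    have hx0 : x = 0 := hinj (by simpa using hpx)
    rw [hx0, addOrderOf_zero] at hx
    exact hp.out.one_lt.ne hx
  have : Nontrivial (ModN G p) := Submodule.Quotient.nontrivial_iff.2 hrange
  obtain ⟨v, hv⟩ := exists_ne (0 : ModN G p)
  obtain ⟨f, hf⟩ : ∃ f : Module.Dual (ZMod p) (ModN G p), f v ≠ 0 := by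
    by_contra! h
    exact hv ((Module.forall_dual_apply_eq_zero_iff (ZMod p) v).1 h)
  have hsurj : Function.Surjective f :=
    LinearMap.surjective fun h0 ↦ hf (by rw [h0, LinearMap.zero_apply])
  let φ : G →+ ZMod p := f.toAddMonoidHom.comp (ModN.mkQ p)
  have hφ : Function.Surjective φ := hsurj.comp (Submodule.mkQ_surjective _)
  refine ⟨φ.ker, ?_⟩
  rw [AddSubgroup.index_ker, AddMonoidHom.range_eq_top.2 hφ, AddSubgroup.card_top, Nat.card_zmod]

theorem exists_notMem_of_index_eq_two {K : AddSubgroup G} (hK : K.index = 2) : ∃ c, c ∉ K := by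
  refine SetLike.exists_not_mem_of_ne_top K fun htop ↦ ?_
  rw [htop, AddSubgroup.index_top] at hK
  exact absurd hK (by decide)

theorem sub_notMem {K : AddSubgroup G} {x c : G} (hx : x ∈ K) (hc : c ∉ K) : x - c ∉ K := by
  rwa [sub_eq_add_neg, K.add_mem_cancel_left hx, K.neg_mem_iff]

theorem two_mul_ncard_compl_of_index_eq_two [Finite G] {K : AddSubgroup G} (hK : K.index = 2) :
    2 * (K : Set G)ᶜ.ncard = Nat.card G := by
  have hcard := K.card_mul_index
  have hadd := Set.ncard_add_ncard_compl (K : Set G)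
  rw [hK, ← SetLike.coe_sort_coe, Nat.card_coe_set_eq] at hcard
  lia

theorem nonempty_prod_addEquiv_of_isCompl {H K : AddSubgroup G} (h : IsCompl H K) :
    Nonempty (H × K ≃+ G) :=
  ⟨(Submodule.prodEquivOfIsCompl _ _ (AddSubgroup.toIntSubmodule.isCompl h)).toAddEquiv⟩

end Subgroup

section Layer

variable {H : Type*} [AddCommGroup H] (K : AddSubgroup H) {m i j l t : ℕ} {a b c x : H}

/-- The fibre over `i` of the set `layeredSet K m` that realises the lower bound for `N₃`. It is
indexed by natural numbers, rather than residues modulo `3m + 2`, so that indices can be compared;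
it has the intended value at `i = m` only when `0 < m`. -/
def layer (m i : ℕ) : Set H :=
  if i = 0 then (K : Set H)ᶜ else if i < m then Set.univ else
    if i = m then {0}ᶜ else if i = m + 1 then {0} else ∅

theorem layer_zero : layer K m 0 = (K : Set H)ᶜ := if_pos rfl

theorem layer_of_lt (hi : 0 < i) (him : i < m) : layer K m i = Set.univ := by
  rw [layer, if_neg hi.ne', if_pos him]

theorem layer_self (hm : 0 < m) : layer K m m = {0}ᶜ := by
  rw [layer, if_neg hm.ne', if_neg (lt_irrefl m), if_pos rfl]

theorem layer_self_add_one : layer K m (m + 1) = {0} := by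
  rw [layer, if_neg m.succ_ne_zero, if_neg (by lia), if_neg m.succ_ne_self, if_pos rfl]

theorem zero_mem_layer_self_add_one : (0 : H) ∈ layer K m (m + 1) := by
  rw [layer_self_add_one]
  exact Set.mem_singleton 0

variable {K}

theorem le_of_mem_layer (hx : x ∈ layer K m i) : i ≤ m + 1 := by
  by_contra! hi
  rwa [layer, if_neg (by lia), if_neg (by lia), if_neg (by lia), if_neg hi.ne'] at hx

theorem layer_nonempty (hK : K.index = 2) (hi : i ≤ m + 1) : (layer K m i).Nonempty := by
  obtain ⟨c, hc⟩ := exists_notMem_of_index_eq_two hK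
  have hc₀ : c ≠ 0 := (ne_of_mem_of_not_mem K.zero_mem hc).symm
  unfold layer
  split_ifs
  · exact ⟨c, hc⟩
  · exact Set.univ_nonempty
  · exact ⟨c, hc₀⟩
  · exact Set.singleton_nonempty 0
  · lia

theorem add_add_ne_zero_of_mem_layer (hm : 0 < m) (hK : K.index = 2) (ha : a ∈ layer K m i)
    (hb : b ∈ layer K m j) (hc : c ∈ layer K m l) (hdvd : 3 * m + 2 ∣ i + (j + l)) :
    a + (b + c) ≠ 0 := by
  have hi := le_of_mem_layer ha
  have hj := le_of_mem_layer hb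
  have hl := le_of_mem_layer hc
  have hsum : i + (j + l) = 0 ∨ i + (j + l) = 3 * m + 2 := by
    obtain ⟨q, hq⟩ := hdvd
    have hq2 : q < 2 := by
      by_contra! h2
      nlinarith
    interval_cases q <;> lia
  rcases hsum with hzero | hmod
  · obtain ⟨rfl, rfl, rfl⟩ : i = 0 ∧ j = 0 ∧ l = 0 := by lia
    rw [layer_zero, Set.mem_compl_iff, SetLike.mem_coe] at ha hb hc
    have hbc : b + c ∈ K := by simp only [AddSubgroup.add_mem_iff_of_index_two hK, hb, hc]
    exact fun h ↦ ha ((K.add_mem_cancel_right hbc).1 (h ▸ K.zero_mem))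
  · obtain ⟨rfl, rfl, rfl⟩ | ⟨rfl, rfl, rfl⟩ | ⟨rfl, rfl, rfl⟩ :
        i = m ∧ j = m + 1 ∧ l = m + 1 ∨ i = m + 1 ∧ j = m ∧ l = m + 1 ∨
          i = m + 1 ∧ j = m + 1 ∧ l = m := by lia
    all_goals
      simp only [layer_self K hm, layer_self_add_one, Set.mem_compl_iff,
        Set.mem_singleton_iff] at ha hb hc
      simpa only [ha, hb, hc, zero_add, add_zero] using by assumption

theorem exists_mem_layer_add_layer_of_two_le (hm : 2 ≤ m) (hK : K.index = 2) (ht₀ : 0 < t)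
    (ht : t ≤ 2 * m) (x : H) : ∃ j l, j + l = t ∧ x ∈ layer K m j + layer K m l := by
  obtain ⟨j, l, hj₀, hjm, hl, hjl⟩ : ∃ j l, 0 < j ∧ j < m ∧ l ≤ m + 1 ∧ j + l = t :=
    ⟨min t (m - 1), t - min t (m - 1), by lia, by lia, by lia, by lia⟩
  refine ⟨j, l, hjl, ?_⟩
  rw [layer_of_lt K hj₀ hjm, Set.univ_add (layer_nonempty hK hl)]
  exact Set.mem_univ x

theorem exists_mem_layer_one_add_layer_one (hK : K.index = 2) (hbot : K ≠ ⊥) (ht₀ : 0 < t)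
    (ht : t ≤ 2) (x : H) : ∃ j l, j + l = t ∧ x ∈ layer K 1 j + layer K 1 l := by
  obtain ⟨c, hc⟩ := exists_notMem_of_index_eq_two hK
  have hlayer₀ {y : H} (hy : y ∉ K) : y ∈ layer K 1 0 := by rwa [layer_zero]
  have hlayer₁ {y : H} (hy : y ≠ 0) : y ∈ layer K 1 1 := by rwa [layer_self K one_pos]
  have hne {y : H} (hy : y ∉ K) : y ≠ 0 := (ne_of_mem_of_not_mem K.zero_mem hy).symm
  by_cases hx : x ∈ K
  · have hxc : x - c ∉ K := sub_notMem hx hc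
    obtain rfl | rfl : t = 1 ∨ t = 2 := by lia
    · exact ⟨0, 1, rfl, c, hlayer₀ hc, x - c, hlayer₁ (hne hxc), add_sub_cancel c x⟩
    · exact ⟨1, 1, rfl, c, hlayer₁ (hne hc), x - c, hlayer₁ (hne hxc), add_sub_cancel c x⟩
  · obtain rfl | rfl : t = 1 ∨ t = 2 := by lia
    · obtain ⟨b, hb, hb₀⟩ := K.bot_or_exists_ne_zero.resolve_left hbot
      have hxb : b + x ∉ K := by rwa [K.add_mem_cancel_left hb]
      exact ⟨1, 0, rfl, -b, hlayer₁ (neg_ne_zero.2 hb₀), b + x, hlayer₀ hxb,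
        neg_add_cancel_left b x⟩
    · exact ⟨0, 2, rfl, x, hlayer₀ hx, 0, zero_mem_layer_self_add_one K, add_zero x⟩

theorem exists_neg_mem_layer_add_layer (hm : 0 < m) (hK : K.index = 2) (hmK : m = 1 → K ≠ ⊥)
    (hi : i < 3 * m + 2) (hx : x ∉ layer K m i) :
    ∃ j l, 3 * m + 2 ∣ i + (j + l) ∧ -x ∈ layer K m j + layer K m l := by
  have hzero : (0 : H) ∈ layer K m (m + 1) := zero_mem_layer_self_add_one K
  obtain rfl | him | rfl | rfl | him : i = 0 ∨ 0 < i ∧ i < m ∨ m = i ∨ i = m + 1 ∨ m + 2 ≤ i := by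
    lia
  · obtain ⟨c, hc⟩ := exists_notMem_of_index_eq_two hK
    rw [layer_zero, Set.notMem_compl_iff, SetLike.mem_coe] at hx
    have hxc : -x - c ∉ K := sub_notMem (K.neg_mem hx) hc
    refine ⟨0, 0, dvd_zero _, c, ?_, -x - c, ?_, add_sub_cancel c (-x)⟩ <;> rwa [layer_zero]
  · exact absurd (layer_of_lt K him.1 him.2 ▸ Set.mem_univ x) hx
  · rw [layer_self K hm, Set.notMem_compl_iff, Set.mem_singleton_iff] at hx
    exact ⟨m + 1, m + 1, ⟨1, by ring⟩, 0, hzero, 0, hzero, by simp only [hx, add_zero, neg_zero]⟩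
  · rw [layer_self_add_one, Set.mem_singleton_iff] at hx
    have hneg : -x ∈ layer K m m := by
      rwa [layer_self K hm, Set.mem_compl_singleton_iff, neg_ne_zero]
    exact ⟨m, m + 1, ⟨1, by ring⟩, -x, hneg, 0, hzero, add_zero (-x)⟩
  · obtain ⟨j, l, hjl, hsum⟩ : ∃ j l, j + l = 3 * m + 2 - i ∧ -x ∈ layer K m j + layer K m l := by
      obtain rfl | hm₂ : m = 1 ∨ 2 ≤ m := by lia
      · exact exists_mem_layer_one_add_layer_one hK (hmK rfl) (by lia) (by lia) (-x)
      · exact exists_mem_layer_add_layer_of_two_le hm₂ hK (by lia) (by lia) (-x)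
    exact ⟨j, l, by rw [hjl, Nat.add_sub_cancel' hi.le], hsum⟩

theorem notMem_layer_iff (hm : 0 < m) (hK : K.index = 2) (hmK : m = 1 → K ≠ ⊥)
    (hi : i < 3 * m + 2) :
    x ∉ layer K m i ↔ ∃ j l, 3 * m + 2 ∣ i + (j + l) ∧ -x ∈ layer K m j + layer K m l := by
  refine ⟨exists_neg_mem_layer_add_layer hm hK hmK hi, ?_⟩
  rintro ⟨j, l, hdvd, b, hb, c, hc, hbc⟩ hx
  exact add_add_ne_zero_of_mem_layer hm hK hx hb hc hdvd (add_eq_zero_iff_neg_eq.2 hbc.symm)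

theorem two_mul_sum_ncard_layer [Finite H] (hm : 0 < m) (hK : K.index = 2) :
    2 * ∑ i ∈ Finset.range (3 * m + 2), (layer K m i).ncard = (2 * m + 1) * Nat.card H := by
  obtain ⟨k, rfl⟩ : ∃ k, m = k + 1 := ⟨m - 1, by lia⟩
  have hempty : ∀ i ∈ Finset.range (3 * (k + 1) + 2), i ∉ Finset.range (k + 3) →
      (layer K (k + 1) i).ncard = 0 := fun i _ hi ↦ by
    rw [Set.ncard_eq_zero, Set.eq_empty_iff_forall_notMem]
    exact fun x hx ↦ hi (Finset.mem_range.2 (Nat.lt_succ_of_le (le_of_mem_layer hx)))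
  have hfull : ∀ i ∈ Finset.range k, (layer K (k + 1) (i + 1)).ncard = Nat.card H := fun i hi ↦ by
    rw [layer_of_lt K i.succ_pos (Nat.succ_lt_succ (Finset.mem_range.1 hi)), Set.ncard_univ]
  have hcompl := two_mul_ncard_compl_of_index_eq_two hK
  have hpunctured := Set.ncard_add_ncard_compl ({0} : Set H)
  rw [Set.ncard_singleton] at hpunctured
  rw [← Finset.sum_subset (Finset.range_mono (by lia)) hempty, Finset.sum_range_succ,
    Finset.sum_range_succ, Finset.sum_range_succ', Finset.sum_congr rfl hfull, layer_zero,
    layer_self K k.succ_pos, layer_self_add_one, Set.ncard_singleton, Finset.sum_const,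
    Finset.card_range, smul_eq_mul]
  linear_combination hcompl + 2 * hpunctured

end Layer

section LayeredSet

variable {H : Type*} [AddCommGroup H] {K : AddSubgroup H} {m i : ℕ} {x : H}

variable (K m) in
/-- The subset of `ℤ/(3m+2) × H` with fibres `H \ K` over `0`, `H` over `1, …, m - 1`, `H \ {0}`
over `m`, `{0}` over `m + 1`, and `∅` elsewhere; for `K` of index two it realises the lower bound
for `N₃`. -/
def layeredSet : Set (ZMod (3 * m + 2) × H) :=
  {p | p.2 ∈ layer K m p.1.val}

theorem natCast_mem_layeredSet (hx : x ∈ layer K m i) :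
    ((i : ZMod (3 * m + 2)), x) ∈ layeredSet K m := by
  have hi := le_of_mem_layer hx
  rwa [layeredSet, Set.mem_ofPred_eq, ZMod.val_natCast_of_lt (by lia)]

theorem mem_layeredSet_add_self {p : ZMod (3 * m + 2) × H} :
    p ∈ layeredSet K m + layeredSet K m ↔
      ∃ j l : ℕ, ((j + l : ℕ) : ZMod (3 * m + 2)) = p.1 ∧ p.2 ∈ layer K m j + layer K m l := by
  constructor
  · rintro ⟨q, hq, r, hr, rfl⟩
    refine ⟨q.1.val, r.1.val, ?_, q.2, hq, r.2, hr, rfl⟩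
    rw [Nat.cast_add, ZMod.natCast_zmod_val, ZMod.natCast_zmod_val, Prod.fst_add]
  · rintro ⟨j, l, hjl, b, hb, c, hc, hbc⟩
    rw [Nat.cast_add] at hjl
    exact ⟨_, natCast_mem_layeredSet hb, _, natCast_mem_layeredSet hc, Prod.ext hjl hbc⟩

theorem layeredSet_add_self (hm : 0 < m) (hK : K.index = 2) (hmK : m = 1 → K ≠ ⊥) :
    layeredSet K m + layeredSet K m = (-layeredSet K m)ᶜ := by
  ext p
  have hdvd (n : ℕ) : 3 * m + 2 ∣ (-p.1).val + n ↔ (n : ZMod (3 * m + 2)) = p.1 := by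
    rw [← ZMod.natCast_eq_zero_iff, Nat.cast_add, ZMod.natCast_zmod_val, neg_add_eq_zero, eq_comm]
  have hiff := notMem_layer_iff (x := -p.2) hm hK hmK (ZMod.val_lt (-p.1))
  simp only [hdvd, neg_neg] at hiff
  exact mem_layeredSet_add_self.trans hiff.symm

theorem period_layeredSet (hm : 0 < m) (hK : K.index = 2) :
    {g : ZMod (3 * m + 2) × H | g +ᵥ layeredSet K m = layeredSet K m} = {0} := by
  refine Set.eq_singleton_iff_unique_mem.2 ⟨zero_vadd _ (layeredSet K m), ?_⟩
  rintro ⟨t, y⟩ hg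
  have hshift {i : ℕ} {x : H} (hx : x ∈ layer K m i) : y + x ∈ layer K m (t + i).val := by
    have h := Set.vadd_mem_vadd_set (a := (t, y)) (natCast_mem_layeredSet hx)
    rwa [hg] at h
  have ht : t.val ≤ m + 1 := by
    obtain ⟨c, hc⟩ := layer_nonempty (m := m) hK (Nat.zero_le _)
    simpa only [Nat.cast_zero, add_zero] using le_of_mem_layer (hshift hc)
  have hval : (t + (m + 1 : ℕ)).val = t.val + (m + 1) := by
    have hcast : ((m + 1 : ℕ) : ZMod (3 * m + 2)).val = m + 1 := ZMod.val_natCast_of_lt (by lia)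
    rw [ZMod.val_add_of_lt (by lia), hcast]
  have hy : y ∈ layer K m (t.val + (m + 1)) := by
    simpa only [add_zero, hval] using hshift (zero_mem_layer_self_add_one K)
  have ht₀ : t.val = 0 := by
    have hle := le_of_mem_layer hy
    lia
  rw [ht₀, zero_add, layer_self_add_one] at hy
  exact Prod.ext ((ZMod.val_eq_zero t).1 ht₀) hy

theorem ncard_setOf_snd_mem_fst_val {α : Type*} [Finite α] (n : ℕ) [NeZero n] (L : ℕ → Set α) :
    {p : ZMod n × α | p.2 ∈ L p.1.val}.ncard = ∑ i ∈ Finset.range n, (L i).ncard := by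
  obtain ⟨k, rfl⟩ := Nat.exists_eq_succ_of_ne_zero (NeZero.ne n)
  rw [← Nat.card_coe_set_eq, Nat.card_congr (Equiv.setProdEquivSigma _), Nat.card_sigma]
  exact Fin.sum_univ_eq_sum_range (fun i ↦ (L i).ncard) (k + 1)

theorem two_mul_ncard_layeredSet [Finite H] (hm : 0 < m) (hK : K.index = 2) :
    2 * (layeredSet K m).ncard = (2 * m + 1) * Nat.card H := by
  rw [layeredSet, ncard_setOf_snd_mem_fst_val, two_mul_sum_ncard_layer hm hK]

theorem isMaximalAperiodic_layeredSet [Finite H] (hm : 0 < m) (hK : K.index = 2)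
    (hmK : m = 1 → K ≠ ⊥) : IsMaximalAperiodic 3 (layeredSet K m) :=
  .of_itSum_eq_compl_neg (Set.toFinite _) (period_layeredSet hm hK)
    ((itSum_two _).trans (layeredSet_add_self hm hK hmK))

end LayeredSet

/-- The set `layeredSet ⊥ 1` for `H = ℤ/2`, as a finset so that its properties are decidable. -/
def smallLayeredFinset : Finset (ZMod 5 × ZMod 2) := {(0, 1), (1, 1), (2, 0)}

theorem isMaximalAperiodic_smallLayeredFinset :
    IsMaximalAperiodic 3 (smallLayeredFinset : Set (ZMod 5 × ZMod 2)) where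
  period_eq := by
    ext g
    simp only [← Finset.coe_vadd_finset, Finset.coe_inj, Set.mem_ofPred_eq, Set.mem_singleton_iff]
    revert g
    decide
  itSum_ne_univ := by
    simp only [itSum_three, ← Finset.coe_add, ← Finset.coe_univ, ne_eq, Finset.coe_inj]
    decide
  itSum_union_singleton := by
    simp only [itSum_three, ← Finset.coe_singleton, ← Finset.coe_union, ← Finset.coe_add,
      ← Finset.coe_univ, Finset.coe_inj, Finset.mem_coe]
    decide

section LowerBound

variable {H : Type*} [AddCommGroup H]

theorem exists_isMaximalAperiodic_three_of_card_eq_two (hH : Nat.card H = 2) :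
    ∃ A : Set (ZMod 5 × H), IsMaximalAperiodic 3 A ∧ A.ncard = 3 := by
  have hcyc : IsAddCyclic H := isAddCyclic_of_prime_card hH
  let e : ZMod 2 ≃+ H :=
    (ZMod.ringEquivCongr hH.symm).toAddEquiv.trans (zmodAddCyclicAddEquiv hcyc)
  let f : ZMod 5 × ZMod 2 ≃+ ZMod 5 × H := (AddEquiv.refl (ZMod 5)).prodCongr e
  refine ⟨_, isMaximalAperiodic_smallLayeredFinset.image f, ?_⟩
  rw [Set.ncard_image_of_injective _ f.injective, Set.ncard_coe_finset]
  rfl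

theorem exists_isMaximalAperiodic_three [Finite H] {m : ℕ} (hm : 0 < m)
    (heven : Even (Nat.card H)) :
    ∃ A : Set (ZMod (3 * m + 2) × H),
      IsMaximalAperiodic 3 A ∧ 2 * A.ncard = (2 * m + 1) * Nat.card H := by
  obtain ⟨K, hK⟩ := exists_addSubgroup_index_eq_of_dvd_card heven.two_dvd
  by_cases hmK : m = 1 → K ≠ ⊥
  · exact ⟨_, isMaximalAperiodic_layeredSet hm hK hmK, two_mul_ncard_layeredSet hm hK⟩
  · obtain ⟨rfl, rfl⟩ : m = 1 ∧ K = ⊥ := by simpa using hmK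
    rw [AddSubgroup.index_bot] at hK
    obtain ⟨A, hA, hcard⟩ := exists_isMaximalAperiodic_three_of_card_eq_two hK
    exact ⟨A, hA, by lia⟩

end LowerBound

/-- If a finite abelian group `G` decomposes as `G = G₁ ⊕ H` with `G₁` cyclic of order
`3m+2` (`m ≥ 1`) and `|H|` even, then `N₃(G) ≥ ((2m+1)/(6m+4))·|G|`. -/
theorem stmt12 (G : Type*) [AddCommGroup G] [Finite G] (m : ℕ) (hm : 1 ≤ m)
    (G₁ H : AddSubgroup G) (hcompl : IsCompl G₁ H)
    (hcyc : IsAddCyclic G₁) (hcard : Nat.card G₁ = 3 * m + 2)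
    (heven : Even (Nat.card H)) :
    (Nk G 3 : ℝ) ≥ (2 * m + 1) / (6 * m + 4) * Nat.card G := by
  obtain ⟨e⟩ := nonempty_prod_addEquiv_of_isCompl hcompl
  let f : ZMod (3 * m + 2) ≃+ G₁ :=
    (ZMod.ringEquivCongr hcard.symm).toAddEquiv.trans (zmodAddCyclicAddEquiv hcyc)
  let φ : ZMod (3 * m + 2) × H ≃+ G := (f.prodCongr (AddEquiv.refl H)).trans e
  obtain ⟨A, hA, hcardA⟩ := exists_isMaximalAperiodic_three hm heven
  have hle : A.ncard ≤ Nk G 3 := by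
    rw [← Set.ncard_image_of_injective A φ.injective]
    exact (hA.image φ).ncard_le_Nk
  have hcardG : Nat.card G = (3 * m + 2) * Nat.card H := by
    rw [← Nat.card_congr φ.toEquiv, Nat.card_prod, Nat.card_zmod]
  have hcardA' : (2 * A.ncard : ℝ) = (2 * m + 1) * Nat.card H := mod_cast hcardA
  calc (2 * m + 1) / (6 * m + 4) * (Nat.card G : ℝ)
      = (2 * m + 1) * Nat.card H / 2 := by
        rw [hcardG]
        push_cast
        field_simp
        ring
    _ = A.ncard := by rw [← hcardA', mul_div_cancel_left₀ _ two_ne_zero]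
    _ ≤ Nk G 3 := mod_cast hle
end

section
/- Let G be a finite abelian group and k ≥ 1 an integer, and define t⁺_{k+1}(G) as the maximum of |A| over all aperiodic generating subsets A ⊆ G such that k(A ∪ {0}) ≠ G and k(A ∪ {0} ∪ {g}) = G for every g ∈ G∖A (with max ∅ = 0). Then t⁺_{k+1}(G) = N_k(G), except when |G| is prime and k ≥ |G| − 1, in which case t⁺_{k+1}(G) = 0 and N_k(G) = 1. -/
open Pointwise

/-- `tPlus G k` (that is, `t⁺_{k+1}(G)`) is the largest size of an aperiodic generating
subset `A ⊆ G` with `k(A ∪ {0}) ≠ G` which is maximal with this property; `0` if no such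
subset exists. -/
noncomputable def tPlus (G : Type*) [AddCommGroup G] (k : ℕ) : ℕ :=
  sSup {m : ℕ | ∃ A : Set G,
    {g : G | g +ᵥ A = A} = {0} ∧
    AddSubgroup.closure A = ⊤ ∧
    itSum k (A ∪ {0}) ≠ Set.univ ∧
    (∀ g ∉ A, itSum k (A ∪ {0} ∪ {g}) = Set.univ) ∧
    m = A.ncard}

/- Translating a set changes neither its size, nor its period, nor whether it is a maximal nonbasis,
so in the definition of `N_k(G)` one may restrict to sets containing `0`, the empty set contributing
only the value `0`. If such an `A` is aperiodic but does not generate `G`, then adding an element of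
`⟨A⟩ \ A` to `A` could not produce all of `G`; hence `A = ⟨A⟩` is a subgroup, and being its own
period it is `{0}`. Thus the two invariants can differ only if `{0}` is a maximal nonbasis, that is,
if `k{0, g} = {0, g, …, kg}` is all of `G` for each `g ≠ 0`: this says that `G` has prime order at
most `k + 1`. In that case a set `A` with `kA ≠ G` has at most one element, which gives the two
exceptional values. -/

section Sumset

variable {G M : Type*} {k : ℕ}

theorem itSum_eq_nsmul [AddCommGroup G] (k : ℕ) (A : Set G) : itSum k A = k • A := by
  induction k with
  | zero => rw [zero_nsmul]; rfl
  | succ k ih => rw [succ_nsmul, ← ih]; rfl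

theorem nsmul_vadd_set [AddCommMonoid M] (k : ℕ) (x : M) (A : Set M) :
    k • (x +ᵥ A) = k • x +ᵥ k • A := by
  rw [← Set.singleton_vadd, ← Set.singleton_vadd, vadd_eq_add, vadd_eq_add, nsmul_add,
    Set.nsmul_singleton]

theorem nsmul_vadd_set_eq_univ_iff [AddCommGroup G] {x : G} {A : Set G} :
    k • (x +ᵥ A) = Set.univ ↔ k • A = Set.univ := by
  rw [nsmul_vadd_set, Set.vadd_set_eq_univ]

theorem closure_eq_top_of_nsmul_eq_univ [AddGroup G] {A : Set G} (h : k • A = Set.univ) :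
    AddSubgroup.closure A = ⊤ := by
  rw [eq_top_iff, ← AddSubgroup.closure_univ, ← h]
  exact AddSubgroup.closure_nsmul_le

theorem nsmul_zero_pair [AddMonoid M] (k : ℕ) (g : M) :
    k • ({0, g} : Set M) = (fun j : ℕ ↦ j • g) '' Set.Iic k := by
  induction k with
  | zero =>
    have Iic_zero : Set.Iic 0 = ({0} : Set ℕ) := Set.Iic_bot
    rw [zero_nsmul, Iic_zero, Set.image_singleton, zero_nsmul, Set.singleton_zero]
  | succ k ih =>
    rw [succ_nsmul, ih]
    ext y
    constructor
    · rintro ⟨_, ⟨j, hj, rfl⟩, _, rfl | rfl, rfl⟩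
      · exact ⟨j, Nat.le_succ_of_le hj, (add_zero _).symm⟩
      · exact ⟨j + 1, Nat.succ_le_succ hj, succ_nsmul ..⟩
    · rintro ⟨j, hj, rfl⟩
      obtain rfl | hjk := eq_or_lt_of_le (Set.mem_Iic.1 hj)
      · exact ⟨k • g, ⟨k, Set.self_mem_Iic, rfl⟩, g, Or.inr rfl, (succ_nsmul ..).symm⟩
      · exact ⟨j • g, ⟨j, Nat.le_of_lt_succ hjk, rfl⟩, 0, Or.inl rfl, add_zero _⟩

theorem nsmul_zero_pair_eq_univ_iff [AddGroup G] [Finite G] {g : G} :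
    k • ({0, g} : Set G) = Set.univ ↔ AddSubgroup.zmultiples g = ⊤ ∧ Nat.card G ≤ k + 1 := by
  constructor
  · intro h
    constructor
    · rw [AddSubgroup.zmultiples_eq_closure, ← AddSubgroup.closure_insert_zero]
      exact closure_eq_top_of_nsmul_eq_univ h
    · rw [← Set.ncard_univ, ← h, nsmul_zero_pair]
      simpa using Set.ncard_image_le (f := fun j : ℕ ↦ j • g) (Set.finite_Iic k)
  · rintro ⟨hg, hk⟩
    rw [nsmul_zero_pair, Set.eq_univ_iff_forall]
    intro y
    obtain ⟨n, rfl⟩ := mem_multiples_iff_mem_zmultiples.2 (hg ▸ AddSubgroup.mem_top y)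
    exact ⟨n % Nat.card G, by have := Nat.mod_lt n (Nat.card_pos (α := G)); grind, by simp⟩

theorem forall_nsmul_zero_pair_eq_univ_iff [AddCommGroup G] [Finite G] [Nontrivial G] :
    (∀ g : G, g ≠ 0 → k • ({0, g} : Set G) = Set.univ) ↔
      (Nat.card G).Prime ∧ Nat.card G - 1 ≤ k := by
  simp only [nsmul_zero_pair_eq_univ_iff, tsub_le_iff_right]
  constructor
  · intro h
    have : IsSimpleAddGroup G := by
      refine ⟨fun H _ ↦ or_iff_not_imp_left.2 fun hH ↦ ?_⟩
      obtain ⟨g, hgH, hg⟩ := H.bot_or_exists_ne_zero.resolve_left hH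
      exact top_le_iff.1 ((h g hg).1 ▸ AddSubgroup.zmultiples_le_of_mem hgH)
    obtain ⟨g, hg⟩ := exists_ne (0 : G)
    exact ⟨IsSimpleAddGroup.prime_card, (h g hg).2⟩
  · rintro ⟨hp, hk⟩ g hg
    have : Fact (Nat.card G).Prime := ⟨hp⟩
    exact ⟨zmultiples_eq_top_of_prime_card rfl hg, hk⟩

end Sumset

section MaximalNonbasis

variable {G : Type*} [AddCommGroup G] {k : ℕ} {A : Set G}

/-- `A` is a maximal nonbasis of order `k` if `kA ≠ G`, but `k(A ∪ {g}) = G` for every `g ∉ A`.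
Here `k • A` is the `k`-fold sumset, not the dilate `{k • a | a ∈ A}`. -/
def IsMaximalNonbasis (k : ℕ) (A : Set G) : Prop :=
  k • A ≠ Set.univ ∧ ∀ g ∉ A, k • insert g A = Set.univ

theorem isMaximalNonbasis_vadd_iff {x : G} :
    IsMaximalNonbasis k (x +ᵥ A) ↔ IsMaximalNonbasis k A := by
  have forall_insert :
      (∀ g ∉ x +ᵥ A, k • insert g (x +ᵥ A) = Set.univ) ↔ ∀ g ∉ A, k • insert g A = Set.univ := by
    rw [(AddAction.surjective x).forall]
    simp only [Set.vadd_mem_vadd_set_iff, ← Set.vadd_set_insert, nsmul_vadd_set_eq_univ_iff]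
  rw [IsMaximalNonbasis, IsMaximalNonbasis, forall_insert, Ne, nsmul_vadd_set_eq_univ_iff]

theorem zero_mem_and_isMaximalNonbasis_iff :
    0 ∈ A ∧ IsMaximalNonbasis k A ↔
      k • insert 0 A ≠ Set.univ ∧ ∀ g ∉ A, k • insert g (insert 0 A) = Set.univ := by
  constructor
  · rintro ⟨h0, hA⟩
    rwa [Set.insert_eq_of_mem h0]
  · rintro ⟨hne, hmax⟩
    have h0 : 0 ∈ A := by
      by_contra h0
      exact hne (by simpa using hmax 0 h0)
    rw [Set.insert_eq_of_mem h0] at hne hmax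
    exact ⟨h0, hne, hmax⟩

theorem IsMaximalNonbasis.coe_closure_eq (hA : IsMaximalNonbasis k A)
    (hgen : AddSubgroup.closure A ≠ ⊤) : (AddSubgroup.closure A : Set G) = A := by
  refine Set.Subset.antisymm (fun g hg ↦ ?_) AddSubgroup.subset_closure
  by_contra hgA
  have hle : AddSubgroup.closure (insert g A) ≤ AddSubgroup.closure A :=
    (AddSubgroup.closure_le _).2 (Set.insert_subset hg AddSubgroup.subset_closure)
  rw [closure_eq_top_of_nsmul_eq_univ (hA.2 g hgA)] at hle
  exact hgen (top_le_iff.1 hle)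

theorem IsMaximalNonbasis.closure_eq_top_or_eq_singleton_zero (hA : IsMaximalNonbasis k A)
    (haper : AddAction.stabilizer G A = ⊥) : AddSubgroup.closure A = ⊤ ∨ A = {0} := by
  refine or_iff_not_imp_left.2 fun hgen ↦ ?_
  have hcl := hA.coe_closure_eq hgen
  have hbot : AddSubgroup.closure A = ⊥ := by
    rw [← haper, ← AddAction.stabilizer_addSubgroup (AddSubgroup.closure A), hcl]
  rw [← hcl, hbot, AddSubgroup.coe_bot]

theorem IsMaximalNonbasis.nontrivial_of_singleton_zero
    (h : IsMaximalNonbasis k ({0} : Set G)) : Nontrivial G := by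
  by_contra hG
  rw [not_nontrivial_iff_subsingleton] at hG
  exact h.1 (Set.eq_univ_of_forall fun y ↦ Subsingleton.elim (k • 0) y ▸
    Set.nsmul_mem_nsmul (Set.mem_singleton 0))

theorem isMaximalNonbasis_singleton_zero_iff_forall [Nontrivial G] :
    IsMaximalNonbasis k ({0} : Set G) ↔ ∀ g : G, g ≠ 0 → k • ({0, g} : Set G) = Set.univ := by
  have hne : k • ({0} : Set G) ≠ Set.univ := fun h ↦ bot_ne_top <|
    AddSubgroup.closure_singleton_zero.symm.trans (closure_eq_top_of_nsmul_eq_univ h)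
  simp only [IsMaximalNonbasis, hne, ne_eq, not_false_eq_true, true_and, Set.mem_singleton_iff,
    Set.pair_comm]

theorem isMaximalNonbasis_singleton_zero_iff [Finite G] :
    IsMaximalNonbasis k ({0} : Set G) ↔ (Nat.card G).Prime ∧ Nat.card G - 1 ≤ k := by
  constructor
  · intro h
    have := h.nontrivial_of_singleton_zero
    exact forall_nsmul_zero_pair_eq_univ_iff.1 (isMaximalNonbasis_singleton_zero_iff_forall.1 h)
  · intro h
    have : Nontrivial G := Finite.one_lt_card_iff_nontrivial.1 h.1.one_lt
    exact isMaximalNonbasis_singleton_zero_iff_forall.2 (forall_nsmul_zero_pair_eq_univ_iff.2 h)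

theorem IsMaximalNonbasis.subsingleton_of_nsmul_ne_univ (h : IsMaximalNonbasis k ({0} : Set G))
    (hA : k • A ≠ Set.univ) : A.Subsingleton := by
  intro a ha b hb
  by_contra hab
  have hpair : k • ({b, a} : Set G) = Set.univ := by
    have := h.2 (b - a) (sub_ne_zero.2 (Ne.symm hab))
    rw [← nsmul_vadd_set_eq_univ_iff (x := a)] at this
    simpa [Set.vadd_set_insert] using this
  exact hA (Set.univ_subset_iff.1 (hpair ▸ Set.nsmul_subset_nsmul_left (Set.pair_subset hb ha)))

end MaximalNonbasis

section Invariants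

variable {G : Type*} [AddCommGroup G] {k : ℕ}

theorem setOf_vadd_eq_self_eq_singleton_zero_iff {A : Set G} :
    {g : G | g +ᵥ A = A} = {0} ↔ AddAction.stabilizer G A = ⊥ := by
  exact SetLike.coe_set_eq (p := AddAction.stabilizer G A) (q := ⊥)

variable (G k) in
theorem Nk_eq_sSup_ncard :
    Nk G k =
      sSup (Set.ncard '' {A : Set G | AddAction.stabilizer G A = ⊥ ∧ IsMaximalNonbasis k A}) := by
  simp only [Nk, setOf_vadd_eq_self_eq_singleton_zero_iff, itSum_eq_nsmul, Set.union_singleton,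
    IsMaximalNonbasis, Set.image, Set.mem_ofPred_eq, and_assoc, eq_comm (b := Set.ncard _)]

variable (G k) in
theorem tPlus_eq_sSup_ncard :
    tPlus G k =
      sSup (Set.ncard '' {A : Set G | AddAction.stabilizer G A = ⊥ ∧
        AddSubgroup.closure A = ⊤ ∧ 0 ∈ A ∧ IsMaximalNonbasis k A}) := by
  simp only [tPlus, setOf_vadd_eq_self_eq_singleton_zero_iff, itSum_eq_nsmul, Set.union_singleton,
    zero_mem_and_isMaximalNonbasis_iff, Set.image, Set.mem_ofPred_eq, and_assoc,
    eq_comm (b := Set.ncard _)]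

theorem Nk_eq_one (h : IsMaximalNonbasis k ({0} : Set G)) : Nk G k = 1 := by
  rw [Nk_eq_sSup_ncard]
  refine IsGreatest.csSup_eq ⟨⟨{0}, ⟨?_, h⟩, Set.ncard_singleton 0⟩, ?_⟩
  · rw [← AddSubgroup.coe_bot, AddAction.stabilizer_addSubgroup]
  · rintro _ ⟨A, ⟨-, hA⟩, rfl⟩
    have hsub := h.subsingleton_of_nsmul_ne_univ hA.1
    exact (Set.ncard_le_one hsub.finite).2 fun _ ha _ hb ↦ hsub ha hb

theorem tPlus_eq_zero (h : IsMaximalNonbasis k ({0} : Set G)) : tPlus G k = 0 := by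
  have := h.nontrivial_of_singleton_zero
  have hempty : {A : Set G | AddAction.stabilizer G A = ⊥ ∧
      AddSubgroup.closure A = ⊤ ∧ 0 ∈ A ∧ IsMaximalNonbasis k A} = ∅ := by
    rw [Set.eq_empty_iff_forall_notMem]
    rintro A ⟨-, hgen, h0, hA⟩
    have hA0 : A = {0} := (h.subsingleton_of_nsmul_ne_univ hA.1).eq_singleton_of_mem h0
    rw [hA0, AddSubgroup.closure_singleton_zero] at hgen
    exact bot_ne_top hgen
  rw [tPlus_eq_sSup_ncard, hempty, Set.image_empty, csSup_empty, bot_eq_zero]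

theorem tPlus_le_Nk [Finite G] : tPlus G k ≤ Nk G k := by
  rw [tPlus_eq_sSup_ncard, Nk_eq_sSup_ncard]
  refine csSup_le_csSup' (Set.toFinite _).bddAbove (Set.image_mono ?_)
  exact fun A ⟨haper, _, _, hA⟩ ↦ ⟨haper, hA⟩

theorem Nk_le_tPlus [Finite G] (h : ¬IsMaximalNonbasis k ({0} : Set G)) : Nk G k ≤ tPlus G k := by
  rw [tPlus_eq_sSup_ncard, Nk_eq_sSup_ncard]
  refine csSup_le' ?_
  rintro _ ⟨A, ⟨haper, hA⟩, rfl⟩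
  obtain rfl | ⟨a, ha⟩ := A.eq_empty_or_nonempty
  · simp
  rw [← Set.ncard_vadd_set (-a) A]
  rw [← AddAction.stabilizer_vadd_eq_right (-a) A] at haper
  rw [← isMaximalNonbasis_vadd_iff (x := -a)] at hA
  have h0 : 0 ∈ -a +ᵥ A := ⟨a, ha, neg_add_cancel a⟩
  have hgen : AddSubgroup.closure (-a +ᵥ A) = ⊤ :=
    (hA.closure_eq_top_or_eq_singleton_zero haper).resolve_right fun hA0 ↦ h (hA0 ▸ hA)
  exact le_csSup (Set.toFinite _).bddAbove ⟨-a +ᵥ A, ⟨haper, hgen, h0, hA⟩, rfl⟩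

end Invariants

/-- `t⁺_{k+1}(G) = N_k(G)`, except when `|G|` is prime and `k ≥ |G| − 1`, in which case
`t⁺_{k+1}(G) = 0` and `N_k(G) = 1`. -/
theorem stmt15 (G : Type*) [AddCommGroup G] [Finite G] (k : ℕ) (hk : 1 ≤ k) :
    (¬ ((Nat.card G).Prime ∧ Nat.card G - 1 ≤ k) → tPlus G k = Nk G k) ∧
    ((Nat.card G).Prime ∧ Nat.card G - 1 ≤ k → tPlus G k = 0 ∧ Nk G k = 1) := by
  rw [← isMaximalNonbasis_singleton_zero_iff]
  exact ⟨fun h ↦ tPlus_le_Nk.antisymm (Nk_le_tPlus h), fun h ↦ ⟨tPlus_eq_zero h, Nk_eq_one h⟩⟩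
end
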